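/- arXiv:2408.05741 — 4 statements merged into one kernel-verified Lean document; each statement's English description precedes it below -/
import Mathlib

section
/- Let n jobs be given, where job j has processing time p_j ∈ ℕ, weight w_j ∈ ℕ and deadline d̃_j ∈ ℕ. For J ⊆ {1,…,n} and t ∈ ℕ, define OPT[J,t] ∈ ℕ∞ as the minimum of ∑_{j∈J} w_j·C_j(π) over all linear orderings π of J, where jobs are processed consecutively without idle time starting at time t (so the k-th job in the order completes at C_{π(k)} = t + ∑_{l≤k} p_{π(l)}), subject to C_j(π) ≤ d̃_j for every j ∈ J; set OPT[J,t] = ∞ if no ordering is feasible, and OPT[∅,t] = 0. Then for every nonempty J ⊆ {1,…,n} and every t ∈ ℕ, OPT[J,t] = min_{j∈J} ( OPT[J∖{j}, t] + g_j ), where g_j = w_j·(t + p(J)) if t + p(J) ≤ d̃_j and g_j = ∞ otherwise, with p(J) = ∑_{k∈J} p_k and the convention x + ∞ = ∞. -/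
/-- Total weighted completion time of the jobs in the list, processed consecutively
without idle time starting at time `t`, in the order given by the list. -/
def wcCost {n : ℕ} (p w : Fin n → ℕ) : ℕ → List (Fin n) → ℕ
  | _, [] => 0
  | t, j :: l => w j * (t + p j) + wcCost p w (t + p j) l

/-- Every job of the list meets its deadline when the jobs are processed consecutively
without idle time starting at time `t`. -/
def deadlineFeasible {n : ℕ} (p d : Fin n → ℕ) : ℕ → List (Fin n) → Prop
  | _, [] => True
  | t, j :: l => t + p j ≤ d j ∧ deadlineFeasible p d (t + p j) l

/-- `OPT p w d J t` : minimum of `∑_{j ∈ J} w j * C j` over all orderings of `J`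
processed consecutively without idle time starting at time `t`, subject to the
deadline constraints (`⊤` if no feasible ordering exists). -/
noncomputable def OPT {n : ℕ} (p w d : Fin n → ℕ) (J : Finset (Fin n)) (t : ℕ) : ℕ∞ :=
  sInf { v : ℕ∞ | ∃ l : List (Fin n), l.Nodup ∧ l.toFinset = J ∧
    deadlineFeasible p d t l ∧ v = (wcCost p w t l : ℕ∞) }

theorem wcCost_append_singleton {n : ℕ} (p w : Fin n → ℕ) (l : List (Fin n)) (j : Fin n) (t : ℕ) :
    wcCost p w t (l ++ [j]) = wcCost p w t l + w j * (t + (l.map p).sum + p j) := by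
  induction l generalizing t with
  | nil => simp [wcCost]
  | cons a l ih =>
    simp only [List.cons_append, wcCost, ih, List.map_cons, List.sum_cons]
    ring

theorem deadlineFeasible_append_singleton {n : ℕ} (p d : Fin n → ℕ) (l : List (Fin n)) (j : Fin n)
    (t : ℕ) :
    deadlineFeasible p d t (l ++ [j]) ↔
      deadlineFeasible p d t l ∧ t + (l.map p).sum + p j ≤ d j := by
  induction l generalizing t with
  | nil => simp [deadlineFeasible]
  | cons a l ih =>
    simp only [List.cons_append, deadlineFeasible, ih, List.map_cons, List.sum_cons, and_assoc,
      add_assoc]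

theorem OPT_le_wcCost {n : ℕ} {p w d : Fin n → ℕ} {t : ℕ} {l : List (Fin n)} (hl : l.Nodup)
    (hf : deadlineFeasible p d t l) : OPT p w d l.toFinset t ≤ wcCost p w t l :=
  sInf_le ⟨l, hl, rfl, hf, rfl⟩

/-- A finite optimum is attained by a feasible ordering. -/
theorem exists_wcCost_eq_OPT {n : ℕ} {p w d : Fin n → ℕ} {J : Finset (Fin n)} {t : ℕ}
    (h : OPT p w d J t ≠ ⊤) :
    ∃ l : List (Fin n), l.Nodup ∧ l.toFinset = J ∧ deadlineFeasible p d t l ∧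
      OPT p w d J t = wcCost p w t l := by
  have hne : { v : ℕ∞ | ∃ l : List (Fin n), l.Nodup ∧ l.toFinset = J ∧
      deadlineFeasible p d t l ∧ v = (wcCost p w t l : ℕ∞) }.Nonempty :=
    Set.nonempty_iff_ne_empty.2 fun he => h (by rw [OPT, he, sInf_empty])
  exact csInf_mem hne

theorem stmt0 {n : ℕ} (p w d : Fin n → ℕ) (J : Finset (Fin n)) (hJ : J.Nonempty) (t : ℕ) :
    OPT p w d J t =
      ⨅ j ∈ J, (OPT p w d (J.erase j) t +
        if t + ∑ k ∈ J, p k ≤ d j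
          then ((w j * (t + ∑ k ∈ J, p k) : ℕ) : ℕ∞) else ⊤) := by
  apply le_antisymm
  · refine le_iInf₂ fun j hj => ?_
    split_ifs with hd
    · by_cases h : OPT p w d (J.erase j) t = ⊤
      · simp [h]
      obtain ⟨l, hl, hlJ, hf, hv⟩ := exists_wcCost_eq_OPT h
      have hjl : j ∉ l := by simp [← List.mem_toFinset, hlJ]
      have hset : (l ++ [j]).toFinset = J := by
        rw [List.toFinset_append, hlJ]
        ext k
        by_cases hk : k = j <;> simp [hk, hj]
      have hsum : t + ∑ k ∈ J, p k = t + (l.map p).sum + p j := by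
        rw [← Finset.sum_erase_add J p hj, ← hlJ, List.sum_toFinset p hl, add_assoc]
      rw [hsum] at hd ⊢
      have hnodup : (l ++ [j]).Nodup := by
        rw [← List.concat_eq_append, List.nodup_concat]
        exact ⟨hjl, hl⟩
      have hle := OPT_le_wcCost (w := w) hnodup
        ((deadlineFeasible_append_singleton p d l j t).2 ⟨hf, hd⟩)
      rwa [hset, wcCost_append_singleton, Nat.cast_add, ← hv] at hle
    · simp
  · refine le_sInf ?_
    rintro _ ⟨l, hl, hlJ, hf, rfl⟩
    rcases List.eq_nil_or_concat' l with rfl | ⟨l, j, rfl⟩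
    · simp [← hlJ] at hJ
    rw [← List.concat_eq_append, List.nodup_concat] at hl
    obtain ⟨hjl, hl⟩ := hl
    obtain ⟨hf, hd⟩ := (deadlineFeasible_append_singleton p d l j t).1 hf
    have hj : j ∈ J := by simp [← hlJ]
    have herase : J.erase j = l.toFinset := by
      ext k
      by_cases hk : k = j
      · simp [hk, hjl]
      · simp [hk, ← hlJ]
    have hsum : t + ∑ k ∈ J, p k = t + (l.map p).sum + p j := by
      rw [← Finset.sum_erase_add J p hj, herase, List.sum_toFinset p hl, add_assoc]
    refine (iInf₂_le j hj).trans ?_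
    rw [hsum, if_pos hd, herase, wcCost_append_singleton, Nat.cast_add]
    gcongr
    exact OPT_le_wcCost hl hf
end

section
/- Let n ≥ 1 jobs be given for the 3-machine permutation flowshop with processing times p_{ij} ≥ 0 (real) for i ∈ {1,2,3}, j ∈ {1,…,n}, let π be any permutation of {1,…,n}, and let β ∈ ℝ satisfy β ≥ −min_{i,j} p_{ij}. If p''_{ij} ≥ 0 are processing times satisfying p''_{ij} ≤ p_{ij} + β for all i, j, and C''_max(π) denotes the makespan of π for the processing times p''_{ij}, then C''_max(π) ≤ C_max(π) + β·(n+2), where C_max(π) is the makespan for the processing times p_{ij}. -/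
/-- Completion times of the 3-machine (more generally `m`-machine) permutation
flowshop : `fsC q π i k` is the completion time `C(i,k)` of the `k`-th scheduled
job (1-based) on machine `i` (1-based), for processing times `q i j` and
permutation `π`, defined by
`C(i,k) = max (C(i-1,k)) (C(i,k-1)) + q i (π k)` with `C(0,k) = C(i,0) = 0`. -/
def fsC (q : ℕ → ℕ → ℝ) (π : ℕ → ℕ) : ℕ → ℕ → ℝ
  | 0, _ => 0
  | _ + 1, 0 => 0
  | i + 1, k + 1 =>
      max (fsC q π i (k + 1)) (fsC q π (i + 1) k) + q (i + 1) (π (k + 1))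

/-- Completion times are nonnegative when the processing times are. -/
theorem fsC_nonneg {m n : ℕ} {q : ℕ → ℕ → ℝ} {π : ℕ → ℕ}
    (hq : ∀ i < m, ∀ k < n, 0 ≤ q (i + 1) (π (k + 1))) :
    ∀ i ≤ m, ∀ k ≤ n, 0 ≤ fsC q π i k := by
  intro i
  induction i with
  | zero => intro _ k _; simp [fsC]
  | succ i ih =>
    intro hi k hk
    cases k with
    | zero => simp [fsC]
    | succ k =>
      rw [fsC]
      exact add_nonneg (le_max_of_le_left (ih (by lia) _ hk)) (hq i hi k hk)

/-- If each processing time grows by at most `β`, which may be negative, then the completion time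
of the `(k + 1)`-st job on machine `i + 1` grows by at most `β` times the number `i + k + 1` of
operations on a critical path. -/
theorem fsC_succ_succ_le_add {m n : ℕ} {p q : ℕ → ℕ → ℝ} {π : ℕ → ℕ} {β : ℝ}
    (hq : ∀ i < m, ∀ k < n, 0 ≤ q (i + 1) (π (k + 1)))
    (hqp : ∀ i < m, ∀ k < n, q (i + 1) (π (k + 1)) ≤ p (i + 1) (π (k + 1)) + β) :
    ∀ i < m, ∀ k < n,
      fsC q π (i + 1) (k + 1) ≤ fsC p π (i + 1) (k + 1) + β * (i + k + 1) := by
  have hnonneg := fsC_nonneg hq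
  intro i
  induction i with
  | zero =>
    intro hi k
    induction k with
    | zero =>
      intro hk
      have := hqp 0 hi 0 hk
      simpa [fsC] using this
    | succ k ihk =>
      intro hk
      have hstep := hqp 0 hi (k + 1) hk
      have hprev := ihk (by lia)
      have hmax : max (fsC q π 0 (k + 1 + 1)) (fsC q π (0 + 1) (k + 1)) =
          fsC q π (0 + 1) (k + 1) :=
        max_eq_right (by simpa [fsC] using hnonneg 1 hi (k + 1) hk.le)
      have hle := le_max_right (fsC p π 0 (k + 1 + 1)) (fsC p π (0 + 1) (k + 1))
      rw [fsC, hmax, fsC.eq_3 p]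
      push_cast at hprev ⊢
      linarith
  | succ i ihi =>
    intro hi k
    induction k with
    | zero =>
      intro hk
      have hstep := hqp (i + 1) hi 0 hk
      have hprev := ihi (by lia) 0 hk
      have hmax : max (fsC q π (i + 1) (0 + 1)) (fsC q π (i + 1 + 1) 0) =
          fsC q π (i + 1) (0 + 1) :=
        max_eq_left (by simpa [fsC.eq_2] using hnonneg (i + 1) hi.le 1 hk)
      have hle := le_max_left (fsC p π (i + 1) (0 + 1)) (fsC p π (i + 1 + 1) 0)
      rw [fsC.eq_3 q _ (i + 1), hmax, fsC.eq_3 p _ (i + 1)]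
      push_cast at hprev ⊢
      linarith
    | succ k ihk =>
      intro hk
      have hstep := hqp (i + 1) hi (k + 1) hk
      have hup := ihi (by lia) (k + 1) hk
      have hleft := ihk (by lia)
      have hle₁ := le_max_left (fsC p π (i + 1) (k + 1 + 1)) (fsC p π (i + 1 + 1) (k + 1))
      have hle₂ := le_max_right (fsC p π (i + 1) (k + 1 + 1)) (fsC p π (i + 1 + 1) (k + 1))
      rw [fsC.eq_3 q _ (i + 1) (k + 1), fsC.eq_3 p _ (i + 1) (k + 1)]
      push_cast at hup hleft ⊢
      rcases max_cases (fsC q π (i + 1) (k + 1 + 1)) (fsC q π (i + 1 + 1) (k + 1)) with h | h <;>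
        rw [h.1] <;> linarith

theorem stmt11 (n : ℕ) (hn : 1 ≤ n) (p p'' : ℕ → ℕ → ℝ)
    (hp : ∀ i ∈ Finset.Icc 1 3, ∀ j ∈ Finset.Icc 1 n, 0 ≤ p i j)
    (π : ℕ → ℕ) (hπ : Set.BijOn π (Set.Icc 1 n) (Set.Icc 1 n))
    (β : ℝ) (hβ : ∀ i ∈ Finset.Icc 1 3, ∀ j ∈ Finset.Icc 1 n, -(p i j) ≤ β)
    (hp'' : ∀ i ∈ Finset.Icc 1 3, ∀ j ∈ Finset.Icc 1 n,
      0 ≤ p'' i j ∧ p'' i j ≤ p i j + β) :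
    fsC p'' π 3 n ≤ fsC p π 3 n + β * (n + 2) := by
  have hbound : ∀ i < 3, ∀ k < n, 0 ≤ p'' (i + 1) (π (k + 1)) ∧
      p'' (i + 1) (π (k + 1)) ≤ p (i + 1) (π (k + 1)) + β := fun i hi k hk =>
    hp'' _ (Finset.mem_Icc.2 (by lia)) _
      (Finset.mem_Icc.2 (hπ.mapsTo (show k + 1 ∈ Set.Icc 1 n from Set.mem_Icc.2 (by lia))))
  obtain ⟨k, rfl⟩ := Nat.exists_eq_add_of_le' hn
  have h := fsC_succ_succ_le_add (fun i hi k hk => (hbound i hi k hk).1)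
    (fun i hi k hk => (hbound i hi k hk).2) 2 (by lia) k (by lia)
  push_cast at h ⊢
  linarith
end

section
/- For all natural numbers n and k with 1 ≤ k and 2k ≤ n, the partial sum of binomial coefficients satisfies ∑_{i=1}^{k} C(n,i) ≤ 2^{H(k/n)·n}, where H(x) = −x·log₂(x) − (1−x)·log₂(1−x) is the binary entropy function. -/
/-- The binary entropy function `H(x) = -x·log₂ x - (1-x)·log₂(1-x)`. -/
noncomputable def binH (x : ℝ) : ℝ :=
  -(x * Real.logb 2 x + (1 - x) * Real.logb 2 (1 - x))

/-- A partial binomial sum, weighted by the smallest Bernoulli weight, is at most `1`. -/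
theorem sum_choose_mul_pow_le_one {n k : ℕ} (hkn : k ≤ n) {p q : ℝ} (hp : 0 ≤ p) (hpq : p ≤ q)
    (hsum : p + q = 1) :
    (∑ i ∈ Finset.Icc 1 k, (n.choose i : ℝ)) * (p ^ k * q ^ (n - k)) ≤ 1 := by
  have hq : 0 ≤ q := hp.trans hpq
  calc (∑ i ∈ Finset.Icc 1 k, (n.choose i : ℝ)) * (p ^ k * q ^ (n - k))
      = ∑ i ∈ Finset.Icc 1 k, p ^ k * q ^ (n - k) * (n.choose i : ℝ) := by
        rw [mul_comm, Finset.mul_sum]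
    _ ≤ ∑ i ∈ Finset.Icc 1 k, p ^ i * q ^ (n - i) * (n.choose i : ℝ) := by
        refine Finset.sum_le_sum fun i hi => ?_
        obtain ⟨-, hik⟩ := Finset.mem_Icc.mp hi
        refine mul_le_mul_of_nonneg_right ?_ (Nat.cast_nonneg _)
        calc p ^ k * q ^ (n - k) = p ^ i * p ^ (k - i) * q ^ (n - k) := by
              rw [← pow_add, Nat.add_sub_cancel' hik]
          _ ≤ p ^ i * q ^ (k - i) * q ^ (n - k) := by gcongr
          _ = p ^ i * q ^ (n - i) := by
              rw [mul_assoc, ← pow_add, show k - i + (n - k) = n - i by omega]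
    _ ≤ ∑ i ∈ Finset.range (n + 1), p ^ i * q ^ (n - i) * (n.choose i : ℝ) := by
        refine Finset.sum_le_sum_of_subset_of_nonneg (fun i hi => ?_) fun i _ _ => by positivity
        simp only [Finset.mem_Icc, Finset.mem_range] at hi ⊢
        omega
    _ = 1 := by rw [← add_pow, hsum, one_pow]

/-- The exponential of the binary entropy at `k / n` inverts the Bernoulli weight. -/
theorem two_rpow_binH_mul {n k : ℕ} (hk : 0 < k) (hkn : k < n) :
    (2 : ℝ) ^ (binH ((k : ℝ) / n) * n) =
      (((k : ℝ) / n) ^ k * (1 - (k : ℝ) / n) ^ (n - k))⁻¹ := by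
  have hk' : (0 : ℝ) < k := by exact_mod_cast hk
  have hkn' : (k : ℝ) < n := by exact_mod_cast hkn
  have hn : (0 : ℝ) < n := hk'.trans hkn'
  have hp : 0 < (k : ℝ) / n := by positivity
  have hq : 0 < 1 - (k : ℝ) / n := by rw [sub_pos, div_lt_one hn]; exact hkn'
  have hexp : binH ((k : ℝ) / n) * n =
      -(Real.logb 2 ((k : ℝ) / n) * k +
        Real.logb 2 (1 - (k : ℝ) / n) * ((n - k : ℕ) : ℝ)) := by
    rw [binH, Nat.cast_sub hkn.le]
    generalize Real.logb 2 ((k : ℝ) / n) = a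
    generalize Real.logb 2 (1 - (k : ℝ) / n) = b
    field_simp
  rw [hexp, Real.rpow_neg zero_le_two, Real.rpow_add two_pos, Real.rpow_mul zero_le_two,
    Real.rpow_mul zero_le_two, Real.rpow_logb two_pos (by norm_num) hp,
    Real.rpow_logb two_pos (by norm_num) hq, Real.rpow_natCast, Real.rpow_natCast]

theorem stmt16 (n k : ℕ) (hk : 1 ≤ k) (hkn : 2 * k ≤ n) :
    ∑ i ∈ Finset.Icc 1 k, (n.choose i : ℝ) ≤ 2 ^ (binH ((k : ℝ) / n) * n) := by
  have hn : (0 : ℝ) < n := by exact_mod_cast (by omega : 0 < n)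
  have hk' : (0 : ℝ) < k := by exact_mod_cast hk
  have hkn' : 2 * (k : ℝ) ≤ n := by exact_mod_cast hkn
  have hp : 0 < (k : ℝ) / n := by positivity
  have hhalf : (k : ℝ) / n ≤ 1 / 2 := by rw [div_le_iff₀ hn]; linarith
  have hq : 0 < 1 - (k : ℝ) / n := by linarith
  rw [two_rpow_binH_mul hk (by omega), ← one_div, le_div_iff₀ (by positivity)]
  exact sum_choose_mul_pow_le_one (by omega) hp.le (by linarith) (by ring)
end

section
/- Let n jobs be given, where job j has processing time p_j ∈ ℕ, weight w_j ∈ ℕ and release date r_j ∈ ℕ. For J ⊆ {1,…,n}, t ∈ ℕ∞ and ε ∈ ℤ, define OPT'[J,t,ε] ∈ ℕ∞ as the minimum makespan over all schedules of J starting at time t whose total weighted completion time ∑_{j∈J} w_j·C_j equals ε; set OPT'[J,t,ε] = ∞ if t = ∞, if ε < 0, or if no such schedule exists. Then for every J ⊆ {1,…,n} of even cardinality |J| ≥ 2, every t ∈ ℕ and every ε ∈ ℤ, OPT'[J,t,ε] = min over all ε' ∈ ℤ with 0 ≤ ε' ≤ ε and all X ⊆ J with |X| = |J|/2 of OPT'[X,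 OPT'[J∖X, t, ε − ε'], ε']. -/
/-- `ValidFrom p r t s` : the list `s` of pairs (job, completion time) is a valid
schedule starting at time `t` : the first job `j` satisfies
`C_j ≥ max t (r j) + p j`, and each further job `j` satisfies
`C_j ≥ max C_prev (r j) + p j` (idle time is allowed). -/
def ValidFrom {n : ℕ} (p r : Fin n → ℕ) : ℕ → List (Fin n × ℕ) → Prop
  | _, [] => True
  | t, (j, c) :: s => max t (r j) + p j ≤ c ∧ ValidFrom p r c s

/-- The makespan of a schedule : the completion time of its last job. -/
def makespan {n : ℕ} (s : List (Fin n × ℕ)) : ℕ :=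
  ((s.map Prod.snd).getLast?).getD 0

/-- The total weighted completion time `∑_j w j * C j` of a schedule. -/
def totalWC {n : ℕ} (w : Fin n → ℕ) (s : List (Fin n × ℕ)) : ℕ :=
  (s.map fun jc => w jc.1 * jc.2).sum

/-- `OPT' p w r J t ε` : minimum makespan over all schedules of the jobs of `J`
starting at time `t` whose total weighted completion time equals `ε`
(`⊤` if `t = ⊤`, if `ε < 0`, or if no such schedule exists). -/
noncomputable def OPT' {n : ℕ} (p w r : Fin n → ℕ) (J : Finset (Fin n))
    (t : ℕ∞) (ε : ℤ) : ℕ∞ :=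
  sInf { v : ℕ∞ | ∃ t₀ : ℕ, (t₀ : ℕ∞) = t ∧ ∃ s : List (Fin n × ℕ),
    (s.map Prod.fst).Nodup ∧ (s.map Prod.fst).toFinset = J ∧
    ValidFrom p r t₀ s ∧ (totalWC w s : ℤ) = ε ∧ v = (makespan s : ℕ∞) }

theorem ValidFrom.mono {n : ℕ} {p r : Fin n → ℕ} {t t' : ℕ} (h : t' ≤ t) :
    ∀ {s : List (Fin n × ℕ)}, ValidFrom p r t s → ValidFrom p r t' s
  | [], _ => trivial
  | (_, _) :: _, hs =>
    ⟨(Nat.add_le_add_right (max_le_max_right _ h) _).trans hs.1, hs.2⟩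

theorem makespan_append {n : ℕ} (s₁ : List (Fin n × ℕ)) {s₂ : List (Fin n × ℕ)}
    (h : s₂ ≠ []) : makespan (s₁ ++ s₂) = makespan s₂ := by
  simp [makespan, List.getLast?_append, List.getLast?_eq_some_getLast h]

theorem totalWC_append {n : ℕ} (w : Fin n → ℕ) (s₁ s₂ : List (Fin n × ℕ)) :
    totalWC w (s₁ ++ s₂) = totalWC w s₁ + totalWC w s₂ := by
  simp [totalWC]

theorem validFrom_append {n : ℕ} {p r : Fin n → ℕ} {s₂ : List (Fin n × ℕ)} :
    ∀ {t : ℕ} {s₁ : List (Fin n × ℕ)}, s₁ ≠ [] →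
      (ValidFrom p r t (s₁ ++ s₂) ↔
        ValidFrom p r t s₁ ∧ ValidFrom p r (makespan s₁) s₂)
  | _, [], h => absurd rfl h
  | _, [(j, c)], _ => by simp [ValidFrom, makespan]
  | t, (j, c) :: a :: s, _ => by
    have ih := validFrom_append (p := p) (r := r) (s₂ := s₂) (t := c)
      (List.cons_ne_nil a s)
    have hm : makespan ((j, c) :: a :: s) = makespan (a :: s) :=
      makespan_append [(j, c)] (List.cons_ne_nil a s)
    rw [hm]
    exact (and_congr_right' ih).trans and_assoc.symm

theorem OPT'_le_makespan {n : ℕ} {p w r : Fin n → ℕ} {J : Finset (Fin n)} {t : ℕ}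
    {ε : ℤ} {s : List (Fin n × ℕ)} (hnd : (s.map Prod.fst).Nodup)
    (hJ : (s.map Prod.fst).toFinset = J) (hv : ValidFrom p r t s)
    (hw : (totalWC w s : ℤ) = ε) : OPT' p w r J t ε ≤ makespan s :=
  sInf_le ⟨t, rfl, s, hnd, hJ, hv, hw, rfl⟩

theorem exists_schedule_of_OPT'_ne_top {n : ℕ} {p w r : Fin n → ℕ}
    {J : Finset (Fin n)} {t : ℕ∞} {ε : ℤ} (h : OPT' p w r J t ε ≠ ⊤) :
    ∃ t₀ : ℕ, (t₀ : ℕ∞) = t ∧ ∃ s : List (Fin n × ℕ),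
      (s.map Prod.fst).Nodup ∧ (s.map Prod.fst).toFinset = J ∧
      ValidFrom p r t₀ s ∧ (totalWC w s : ℤ) = ε ∧
      OPT' p w r J t ε = (makespan s : ℕ∞) := by
  have hne := Set.nonempty_iff_ne_empty.2 fun hempty =>
    h ((congrArg sInf hempty).trans sInf_empty)
  exact csInf_mem hne

theorem OPT'_le_OPT'_OPT' {n : ℕ} {p w r : Fin n → ℕ} {J X : Finset (Fin n)}
    (hXJ : X ⊆ J) (hX : X.Nonempty) (hJX : (J \ X).Nonempty) (t : ℕ) (ε ε' : ℤ) :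
    OPT' p w r J t ε ≤ OPT' p w r X (OPT' p w r (J \ X) t (ε - ε')) ε' := by
  by_cases htop : OPT' p w r X (OPT' p w r (J \ X) t (ε - ε')) ε' = ⊤
  · exact htop ▸ le_top
  obtain ⟨m, hm, s₂, hnd₂, hX₂, hv₂, hw₂, hopt₂⟩ := exists_schedule_of_OPT'_ne_top htop
  obtain ⟨t₀, ht₀, s₁, hnd₁, hX₁, hv₁, hw₁, hopt₁⟩ :=
    exists_schedule_of_OPT'_ne_top (hm ▸ ENat.natCast_ne_top m)
  obtain rfl : t₀ = t := by exact_mod_cast ht₀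
  obtain rfl : m = makespan s₁ := by exact_mod_cast hm.trans hopt₁
  have hs₁ : s₁ ≠ [] := by
    rintro rfl
    simp [← hX₁] at hJX
  have hs₂ : s₂ ≠ [] := by
    rintro rfl
    simp [← hX₂] at hX
  rw [hopt₂, ← makespan_append s₁ hs₂]
  refine OPT'_le_makespan ?_ ?_ ((validFrom_append hs₁).2 ⟨hv₁, hv₂⟩) ?_
  · rw [List.map_append]
    refine hnd₁.append hnd₂ ?_
    rw [← List.disjoint_toFinset_iff_disjoint, hX₁, hX₂]
    exact Finset.sdiff_disjoint
  · rw [List.map_append, List.toFinset_append, hX₁, hX₂]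
    exact Finset.sdiff_union_of_subset hXJ
  · rw [totalWC_append]
    push_cast
    omega

theorem OPT'_OPT'_le_makespan_append {n : ℕ} {p w r : Fin n → ℕ} {t : ℕ}
    {s₁ s₂ : List (Fin n × ℕ)} (hs₁ : s₁ ≠ []) (hs₂ : s₂ ≠ [])
    (hnd₁ : (s₁.map Prod.fst).Nodup) (hnd₂ : (s₂.map Prod.fst).Nodup)
    (hv : ValidFrom p r t (s₁ ++ s₂)) :
    OPT' p w r (s₂.map Prod.fst).toFinset
      (OPT' p w r (s₁.map Prod.fst).toFinset t (totalWC w s₁)) (totalWC w s₂) ≤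
      makespan (s₁ ++ s₂) := by
  obtain ⟨hv₁, hv₂⟩ := (validFrom_append hs₁).1 hv
  have hle := OPT'_le_makespan (w := w) hnd₁ rfl hv₁ rfl
  obtain ⟨m, hm⟩ := ENat.ne_top_iff_exists.1 (ne_top_of_le_ne_top (ENat.natCast_ne_top _) hle)
  rw [← hm] at hle ⊢
  rw [makespan_append s₁ hs₂]
  exact OPT'_le_makespan hnd₂ rfl (hv₂.mono (by exact_mod_cast hle)) rfl

theorem stmt19 {n : ℕ} (p w r : Fin n → ℕ) (J : Finset (Fin n))
    (hJcard : 2 ≤ J.card) (hJeven : Even J.card) (t : ℕ) (ε : ℤ) :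
    OPT' p w r J (t : ℕ∞) ε =
      ⨅ (ε' : ℤ) (_ : 0 ≤ ε' ∧ ε' ≤ ε) (X : Finset (Fin n))
          (_ : X ⊆ J ∧ X.card = J.card / 2),
        OPT' p w r X (OPT' p w r (J \ X) (t : ℕ∞) (ε - ε')) ε' := by
  have hhalf : J.card / 2 + J.card / 2 = J.card := by
    obtain ⟨k, hk⟩ := hJeven
    omega
  apply le_antisymm
  · refine le_iInf fun ε' => le_iInf fun _ => le_iInf fun X => le_iInf fun hX => ?_
    have hcard := Finset.card_sdiff_of_subset hX.1
    exact OPT'_le_OPT'_OPT' hX.1 (Finset.card_pos.1 (by omega))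
      (Finset.card_pos.1 (by omega)) t ε ε'
  · refine le_sInf ?_
    rintro _ ⟨t₀, ht₀, s, hnd, rfl, hv, rfl, rfl⟩
    obtain rfl : t₀ = t := by exact_mod_cast ht₀
    rw [List.toFinset_card_of_nodup hnd, List.length_map] at *
    obtain ⟨s₁, s₂, rfl, hlen⟩ : ∃ s₁ s₂, s = s₁ ++ s₂ ∧ s₁.length = s.length / 2 :=
      ⟨s.take (s.length / 2), s.drop (s.length / 2), (List.take_append_drop _ _).symm,
        by rw [List.length_take]; omega⟩
    rw [List.length_append] at *
    rw [List.map_append] at hnd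
    obtain ⟨hnd₁, hnd₂, hdisj⟩ := List.nodup_append'.1 hnd
    have hs₁ : s₁ ≠ [] := List.length_pos_iff.1 (by omega)
    have hs₂ : s₂ ≠ [] := List.length_pos_iff.1 (by omega)
    have hsdiff : ((s₁ ++ s₂).map Prod.fst).toFinset \ (s₂.map Prod.fst).toFinset =
        (s₁.map Prod.fst).toFinset := by
      rw [List.map_append, List.toFinset_append, Finset.union_sdiff_right]
      exact Finset.sdiff_eq_self_of_disjoint (List.disjoint_toFinset_iff_disjoint.2 hdisj)
    have hε : ((totalWC w (s₁ ++ s₂) : ℕ) : ℤ) - totalWC w s₂ = totalWC w s₁ := by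
      rw [totalWC_append]
      push_cast
      ring
    refine iInf_le_of_le (totalWC w s₂ : ℤ) (iInf_le_of_le ⟨by positivity, by omega⟩
      (iInf_le_of_le (s₂.map Prod.fst).toFinset (iInf_le_of_le ⟨?_, ?_⟩ ?_)))
    · rw [List.map_append, List.toFinset_append]
      exact Finset.subset_union_right
    · rw [List.toFinset_card_of_nodup hnd₂, List.length_map]
      omega
    · rw [hsdiff, hε]
      exact OPT'_OPT'_le_makespan_append hs₁ hs₂ hnd₁ hnd₂ hv
end
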